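/- arXiv:2509.02874 — 2 statements merged into one kernel-verified Lean document; each statement's English description precedes it below -/
import Mathlib

section
/- Let n ≥ 1, let α be real with 0 < α < 1/2, and let 1 ≤ i ≤ j ≤ n. Then the (i,j) entry of (I − α·A_{P_n})^{-1} equals α^{j−i}·d_{i−1}(α)·d_{n−j}(α)/d_n(α). In particular, for i < j the Katz similarity index satisfies K_{P_n}(α)_{i,j} = α^{j−i}·d_{i−1}(α)·d_{n−j}(α)/d_n(α). -/
/-- `dpoly n α = ∑_{m=0}^{⌊n/2⌋} (-1)^m C(n-m, m) α^(2m)`. -/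
noncomputable def dpoly (n : ℕ) (α : ℝ) : ℝ :=
  ∑ m ∈ Finset.range (n / 2 + 1), (-1 : ℝ) ^ m * (Nat.choose (n - m) m : ℝ) * α ^ (2 * m)

/-- Adjacency matrix of the path graph on `n` vertices. -/
def pathAdj (n : ℕ) : Matrix (Fin n) (Fin n) ℝ :=
  fun i j => if i.val + 1 = j.val ∨ j.val + 1 = i.val then 1 else 0

/-!
With `d₋₁ = 0`, the recurrence `d_{n+2} = d_{n+1} - α² d_n` says that, away from the diagonal, every
column of `G i j = α^(j-i) d_{i-1} d_{n-j}` (for `i ≤ j`, extended symmetrically) solves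
`x i = α (x (i-1) + x (i+1))` and vanishes at the phantom vertices `0` and `n + 1` of the path.
On the diagonal the defect is `d_n`, by the continuant identity
`d_{i+s} = d_i d_s - α² d_{i-1} d_{s-1}`. Hence `(I - αA) G = d_n I`. For `|α| ≤ 1/2` the bound
`d_n ≤ 2 d_{n+1}` propagates along the recurrence and keeps `d_n` positive.
-/

theorem dpoly_eq_sum_range {n N : ℕ} (hN : n / 2 < N) (α : ℝ) :
    dpoly n α = ∑ m ∈ Finset.range N, (-1 : ℝ) ^ m * (Nat.choose (n - m) m : ℝ) * α ^ (2 * m) := by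
  refine Finset.sum_subset (Finset.range_subset_range.2 hN) fun m _ hm => ?_
  have hlt : n - m < m := by
    rw [Finset.mem_range] at hm
    omega
  simp [Nat.choose_eq_zero_of_lt hlt]

theorem dpoly_zero (α : ℝ) : dpoly 0 α = 1 := by
  simp [dpoly]

theorem dpoly_one (α : ℝ) : dpoly 1 α = 1 := by
  simp [dpoly]

theorem dpoly_add_two (n : ℕ) (α : ℝ) :
    dpoly (n + 2) α = dpoly (n + 1) α - α ^ 2 * dpoly n α := by
  have pascal (m : ℕ) (hm : m ∈ Finset.range (n + 1)) :
      (Nat.choose (n + 2 - (m + 1)) (m + 1) : ℝ)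
        = Nat.choose (n - m) m + Nat.choose (n + 1 - (m + 1)) (m + 1) := by
    rw [Finset.mem_range] at hm
    rw [show n + 2 - (m + 1) = n - m + 1 by omega, Nat.add_sub_add_right, Nat.choose_succ_succ,
      Nat.cast_add]
  rw [dpoly_eq_sum_range (show (n + 2) / 2 < n + 2 by omega),
    dpoly_eq_sum_range (show (n + 1) / 2 < n + 2 by omega),
    dpoly_eq_sum_range (show n / 2 < n + 1 by omega),
    Finset.sum_range_succ' _ (n + 1), Finset.sum_range_succ' _ (n + 1), Finset.mul_sum,
    add_sub_right_comm, ← Finset.sum_sub_distrib]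
  congr 1
  refine Finset.sum_congr rfl fun m hm => ?_
  rw [pascal m hm]
  ring

theorem dpoly_pos {α : ℝ} (hα : |α| ≤ 1 / 2) (n : ℕ) : 0 < dpoly n α := by
  have sq_le : α ^ 2 ≤ 1 / 4 := (sq_le_sq' (abs_le.1 hα).1 (abs_le.1 hα).2).trans_eq (by norm_num)
  suffices 0 < dpoly n α ∧ dpoly n α ≤ 2 * dpoly (n + 1) α from this.1
  induction n with
  | zero => norm_num [dpoly_zero, dpoly_one]
  | succ n ih =>
    obtain ⟨pos, le_two_mul⟩ := ih
    have half_le : α ^ 2 * dpoly n α ≤ 1 / 4 * (2 * dpoly (n + 1) α) :=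
      mul_le_mul sq_le le_two_mul pos.le (by norm_num)
    constructor <;> linarith [dpoly_add_two n α]

/-- The sequence `k ↦ d_{k-1}(α)` with the convention `d_{-1} = 0`, which extends the recurrence of
`dpoly` one step to the left. -/
noncomputable def dpolyPred (α : ℝ) : ℕ → ℝ
  | 0 => 0
  | k + 1 => dpoly k α

theorem dpolyPred_zero (α : ℝ) : dpolyPred α 0 = 0 := rfl

theorem dpolyPred_succ (α : ℝ) (k : ℕ) : dpolyPred α (k + 1) = dpoly k α := rfl

theorem dpolyPred_add_two (α : ℝ) (k : ℕ) :
    dpolyPred α (k + 2) = dpolyPred α (k + 1) - α ^ 2 * dpolyPred α k := by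
  cases k with
  | zero => simp [dpolyPred, dpoly_zero, dpoly_one]
  | succ k => exact dpoly_add_two k α

theorem dpolyPred_add_add_one (α : ℝ) (r s : ℕ) :
    dpolyPred α (r + s + 1)
      = dpolyPred α (r + 1) * dpolyPred α (s + 1) - α ^ 2 * (dpolyPred α r * dpolyPred α s) := by
  induction s generalizing r with
  | zero => simp [dpolyPred, dpoly_zero]
  | succ s ih =>
    rw [← add_assoc, add_right_comm r s 1, ih (r + 1), dpolyPred_add_two α r,
      dpolyPred_add_two α s]
    ring

/-- The unnormalized Green's function of `I - αA` on the path with `n` vertices, with rows and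
columns indexed from `1` so that `0` and `n + 1` are the vertices just outside the path. -/
noncomputable def green (n : ℕ) (α : ℝ) (i j : ℕ) : ℝ :=
  α ^ (max i j - min i j) * dpolyPred α (min i j) * dpolyPred α (n + 1 - max i j)

section Green

variable {n i j : ℕ} (α : ℝ)

theorem green_of_le (hij : i ≤ j) :
    green n α i j = α ^ (j - i) * dpolyPred α i * dpolyPred α (n + 1 - j) := by
  rw [green, max_eq_right hij, min_eq_left hij]

theorem green_of_ge (hij : j ≤ i) :
    green n α i j = α ^ (i - j) * dpolyPred α j * dpolyPred α (n + 1 - i) := by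
  rw [green, max_eq_left hij, min_eq_right hij]

theorem green_zero_left : green n α 0 j = 0 := by
  simp [green, dpolyPred_zero]

theorem green_add_one_left (hj : j ≤ n + 1) : green n α (n + 1) j = 0 := by
  simp [green_of_ge α hj, dpolyPred_zero]

theorem green_sub_of_lt (hij : i + 1 < j) :
    green n α (i + 1) j - α * (green n α i j + green n α (i + 2) j) = 0 := by
  obtain ⟨t, rfl⟩ := Nat.exists_eq_add_of_le (show i + 2 ≤ j from hij)
  rw [green_of_le α (show i + 1 ≤ i + 2 + t by omega), green_of_le α (show i ≤ i + 2 + t by omega),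
    green_of_le α (show i + 2 ≤ i + 2 + t by omega), show i + 2 + t - (i + 1) = t + 1 by omega,
    show i + 2 + t - i = t + 2 by omega, Nat.add_sub_cancel_left, dpolyPred_add_two]
  ring

theorem green_sub_of_gt (hij : j ≤ i) (hi : i < n) :
    green n α (i + 1) j - α * (green n α i j + green n α (i + 2) j) = 0 := by
  obtain ⟨t, rfl⟩ := Nat.exists_eq_add_of_le hij
  obtain ⟨s, rfl⟩ := Nat.exists_eq_add_of_le (show j + t + 1 ≤ n from hi)
  rw [green_of_ge α (show j ≤ j + t + 1 by omega), green_of_ge α (show j ≤ j + t by omega),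
    green_of_ge α (show j ≤ j + t + 2 by omega), show j + t + 1 - j = t + 1 by omega,
    show j + t + 2 - j = t + 2 by omega, Nat.add_sub_cancel_left,
    show j + t + 1 + s + 1 - (j + t + 1) = s + 1 by omega,
    show j + t + 1 + s + 1 - (j + t) = s + 2 by omega,
    show j + t + 1 + s + 1 - (j + t + 2) = s by omega, dpolyPred_add_two]
  ring

theorem green_sub_diag (hi : i < n) :
    green n α (i + 1) (i + 1) - α * (green n α i (i + 1) + green n α (i + 2) (i + 1))
      = dpoly n α := by
  obtain ⟨s, rfl⟩ := Nat.exists_eq_add_of_le (show i + 1 ≤ n from hi)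
  rw [green_of_le α le_rfl, green_of_le α (show i ≤ i + 1 by omega),
    green_of_ge α (show i + 1 ≤ i + 2 by omega), Nat.sub_self, Nat.add_sub_cancel_left,
    Nat.add_sub_add_left, show i + 1 + s + 1 - (i + 1) = s + 1 by omega,
    show i + 1 + s + 1 - (i + 2) = s by omega, ← dpolyPred_succ, dpolyPred_add_add_one,
    dpolyPred_add_two]
  ring

theorem green_sub (hi : i < n) :
    green n α (i + 1) j - α * (green n α i j + green n α (i + 2) j)
      = if i + 1 = j then dpoly n α else 0 := by
  rcases lt_trichotomy (i + 1) j with hlt | rfl | hgt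
  · rw [green_sub_of_lt α hlt, if_neg hlt.ne]
  · rw [green_sub_diag α hi, if_pos rfl]
  · rw [green_sub_of_gt α (Nat.lt_succ_iff.1 hgt) hi, if_neg hgt.ne']

end Green

theorem pathAdj_mulVec_apply {n : ℕ} {f : ℕ → ℝ} (hf_zero : f 0 = 0) (hf_last : f (n + 1) = 0)
    (i : Fin n) :
    (pathAdj n).mulVec (fun k => f (k + 1)) i = f i + f (i + 2) := by
  let g : ℕ → ℝ := fun m => (if m = i then f m else 0) + if m = i + 2 then f m else 0
  have entry_mul (k : Fin n) : pathAdj n i k * f (k + 1) = g (k + 1) := by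
    simp only [pathAdj, g]
    split_ifs <;> first | omega | simp
  calc (pathAdj n).mulVec (fun k => f (k + 1)) i
      = ∑ k : Fin n, g (k + 1) := by simp only [Matrix.mulVec, dotProduct, entry_mul]
    _ = ∑ k ∈ Finset.range n, g (k + 1) := Fin.sum_univ_eq_sum_range (fun k => g (k + 1)) n
    _ = ∑ m ∈ Finset.range (n + 2), g m := by
      rw [Finset.sum_range_succ, Finset.sum_range_succ']
      simp [g, hf_zero, hf_last]
    _ = f i + f (i + 2) := by
      rw [Finset.sum_add_distrib, Finset.sum_ite_eq', Finset.sum_ite_eq',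
        if_pos (Finset.mem_range.2 (by omega)), if_pos (Finset.mem_range.2 (by omega))]

/-- The values of `green` at the vertices of the path, as a matrix; `Fin n` counts from `0`. -/
noncomputable def greenMatrix (n : ℕ) (α : ℝ) : Matrix (Fin n) (Fin n) ℝ :=
  Matrix.of fun i j => green n α (i + 1) (j + 1)

theorem one_sub_smul_pathAdj_mul_greenMatrix (n : ℕ) (α : ℝ) :
    (1 - α • pathAdj n) * greenMatrix n α = dpoly n α • 1 := by
  ext i j
  have pathAdj_mul : (pathAdj n * greenMatrix n α) i j
      = green n α i (j + 1) + green n α (i + 2) (j + 1) :=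
    pathAdj_mulVec_apply (f := fun k => green n α k (j + 1)) (green_zero_left α)
      (green_add_one_left α (by omega)) i
  rw [sub_mul, one_mul, smul_mul_assoc, Matrix.sub_apply, Matrix.smul_apply, pathAdj_mul,
    smul_eq_mul, greenMatrix, Matrix.of_apply, green_sub α i.isLt]
  simp [Matrix.one_apply, Fin.ext_iff]

theorem inv_one_sub_smul_pathAdj {n : ℕ} {α : ℝ} (hd : dpoly n α ≠ 0) :
    (1 - α • pathAdj n)⁻¹ = (dpoly n α)⁻¹ • greenMatrix n α := by
  refine Matrix.inv_eq_right_inv ?_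
  rw [mul_smul_comm, one_sub_smul_pathAdj_mul_greenMatrix, inv_smul_smul₀ hd]

theorem inv_one_sub_smul_pathAdj_apply_of_le {n : ℕ} {α : ℝ} (hd : dpoly n α ≠ 0) {i j : Fin n}
    (hij : i ≤ j) :
    (1 - α • pathAdj n)⁻¹ i j
      = α ^ (j - i : ℕ) * dpoly i α * dpoly (n - (j + 1)) α / dpoly n α := by
  have hij' : (i : ℕ) + 1 ≤ j + 1 := Nat.succ_le_succ hij
  rw [inv_one_sub_smul_pathAdj hd, Matrix.smul_apply, greenMatrix, Matrix.of_apply,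
    green_of_le α hij', Nat.add_sub_add_right, Nat.sub_add_comm j.isLt, dpolyPred_succ,
    dpolyPred_succ, smul_eq_mul, inv_mul_eq_div]

theorem stmt2_general {i j n : ℕ} {α : ℝ} (hd : dpoly n α ≠ 0) (hi : 1 ≤ i) (hij : i ≤ j)
    (hj : j ≤ n) :
    (((1 : Matrix (Fin n) (Fin n) ℝ) - α • pathAdj n)⁻¹) ⟨i - 1, by omega⟩ ⟨j - 1, by omega⟩
        = α ^ (j - i) * dpoly (i - 1) α * dpoly (n - j) α / dpoly n α ∧
      (i < j →
        (((1 : Matrix (Fin n) (Fin n) ℝ) - α • pathAdj n)⁻¹ - 1)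
            ⟨i - 1, by omega⟩ ⟨j - 1, by omega⟩
          = α ^ (j - i) * dpoly (i - 1) α * dpoly (n - j) α / dpoly n α) := by
  obtain ⟨i, rfl⟩ := Nat.exists_eq_add_of_le' hi
  obtain ⟨j, rfl⟩ := Nat.exists_eq_add_of_le' (hi.trans hij)
  have inv_apply := inv_one_sub_smul_pathAdj_apply_of_le hd
    (i := ⟨i, by omega⟩) (j := ⟨j, by omega⟩) (Nat.le_of_succ_le_succ hij)
  simp only [Nat.add_sub_cancel, Nat.add_sub_add_right]
  refine ⟨inv_apply, fun hlt => ?_⟩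
  have hne : (⟨i, by omega⟩ : Fin n) ≠ ⟨j, by omega⟩ := Fin.ne_of_lt (Nat.lt_of_succ_lt_succ hlt)
  rw [Matrix.sub_apply, Matrix.one_apply_ne hne, sub_zero, inv_apply]

theorem stmt2 (n : ℕ) (hn : 1 ≤ n) (α : ℝ) (hα0 : 0 < α) (hα1 : α < 1 / 2)
    (i j : ℕ) (hi : 1 ≤ i) (hij : i ≤ j) (hj : j ≤ n) :
    (((1 : Matrix (Fin n) (Fin n) ℝ) - α • pathAdj n)⁻¹) ⟨i - 1, by omega⟩ ⟨j - 1, by omega⟩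
        = α ^ (j - i) * dpoly (i - 1) α * dpoly (n - j) α / dpoly n α ∧
      (i < j →
        (((1 : Matrix (Fin n) (Fin n) ℝ) - α • pathAdj n)⁻¹ - 1)
            ⟨i - 1, by omega⟩ ⟨j - 1, by omega⟩
          = α ^ (j - i) * dpoly (i - 1) α * dpoly (n - j) α / dpoly n α) :=
  stmt2_general (dpoly_pos (abs_le.2 ⟨by linarith, hα1.le⟩) n).ne' hi hij hj
end

section
/- Let n ≥ 2 and let α be real with 0 < α < 1/√5. Then for all pairs 1 ≤ i < j ≤ n and 1 ≤ i' < j' ≤ n with j − i > j' − i', one has K_{P_n}(α)_{i,j} < K_{P_n}(α)_{i',j'}. (Since both the graph distance and the effective resistance between vertices i < j of a path equal j − i, this says that for α < 1/√5 the Katz similarity index ranks all node pairs of the path in the order opposite to distance and resistance distance.) -/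
/-!
Write `E k` for the determinant of `1 - αA` on the path with `k - 1` vertices. Up to the factor
`E (n + 1)`, the entry of `(1 - αA)⁻¹` at vertices `k ≤ l` at distance `d = l - k` is
`α ^ d * (E k * E (n + 1 - l))`, and for `d ≥ 1` it lies in the interval from
`L d = α ^ d * E (n - d)` (included) to `L (d - 1)` (excluded). As `L` is antitone, the entries are
ordered by distance. The lower bound is read off the addition formula of `E`. The upper bound is
`α * (E k * E (n + 1 - l)) < E (n + 1 - d)`, which follows from the same formula and from
`r * E m < E (m + 1)` for the ratio `r = (1 + α) / 2`; this ratio propagates along the recurrence of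
`E` as soon as `α ^ 2 ≤ r * (1 - r)`, which says exactly `5 * α ^ 2 ≤ 1`.
-/

section Continuant

/-- The continuants of the path. For `c = α ^ 2` the value at `k + 1` is the determinant of
`1 - αA` on the path with `k` vertices; the shift of the index makes room for the value `0` at `0`,
which serves as boundary condition next to an end of the path. -/
def pathContinuant {R : Type*} [CommRing R] (c : R) : ℕ → R
  | 0 => 0
  | 1 => 1
  | k + 2 => pathContinuant c (k + 1) - c * pathContinuant c k

section CommRing

variable {R : Type*} [CommRing R] (c : R)

@[simp]
theorem pathContinuant_zero : pathContinuant c 0 = 0 := rfl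

@[simp]
theorem pathContinuant_one : pathContinuant c 1 = 1 := rfl

theorem pathContinuant_add_two (k : ℕ) :
    pathContinuant c (k + 2) = pathContinuant c (k + 1) - c * pathContinuant c k := rfl

theorem pathContinuant_add_add_one (p q : ℕ) :
    pathContinuant c (p + q + 1) =
      pathContinuant c (p + 1) * pathContinuant c (q + 1) -
        c * (pathContinuant c p * pathContinuant c q) := by
  induction p generalizing q with
  | zero => simp
  | succ p ih =>
    rw [show p + 1 + q + 1 = p + (q + 1) + 1 by ring, ih, pathContinuant_add_two c q,
      pathContinuant_add_two c p]
    ring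

end CommRing

section Order

variable {R : Type*} [CommRing R] [LinearOrder R] [IsStrictOrderedRing R] {c r : R}

theorem pathContinuant_nonneg_and_mul_lt_succ (hr0 : 0 < r) (hr1 : r < 1) (hc : c ≤ r * (1 - r))
    (k : ℕ) : 0 ≤ pathContinuant c k ∧ r * pathContinuant c k < pathContinuant c (k + 1) := by
  induction k with
  | zero => simp
  | succ k ih =>
    obtain ⟨hnonneg, hlt⟩ := ih
    refine ⟨(mul_nonneg hr0.le hnonneg).trans hlt.le, ?_⟩
    have hsub : c * pathContinuant c k < (1 - r) * pathContinuant c (k + 1) :=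
      calc c * pathContinuant c k ≤ r * (1 - r) * pathContinuant c k := by gcongr
        _ = (1 - r) * (r * pathContinuant c k) := by ring
        _ < (1 - r) * pathContinuant c (k + 1) := mul_lt_mul_of_pos_left hlt (sub_pos.2 hr1)
    rw [pathContinuant_add_two]
    linarith

theorem pathContinuant_nonneg (hr0 : 0 < r) (hr1 : r < 1) (hc : c ≤ r * (1 - r)) (k : ℕ) :
    0 ≤ pathContinuant c k :=
  (pathContinuant_nonneg_and_mul_lt_succ hr0 hr1 hc k).1

theorem mul_pathContinuant_lt_succ (hr0 : 0 < r) (hr1 : r < 1) (hc : c ≤ r * (1 - r)) (k : ℕ) :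
    r * pathContinuant c k < pathContinuant c (k + 1) :=
  (pathContinuant_nonneg_and_mul_lt_succ hr0 hr1 hc k).2

theorem pathContinuant_succ_pos (hr0 : 0 < r) (hr1 : r < 1) (hc : c ≤ r * (1 - r)) (k : ℕ) :
    0 < pathContinuant c (k + 1) :=
  (mul_nonneg hr0.le (pathContinuant_nonneg hr0 hr1 hc k)).trans_lt
    (mul_pathContinuant_lt_succ hr0 hr1 hc k)

theorem mul_pathContinuant_mul_lt_add (hr0 : 0 < r) (hr1 : r < 1) (hc : c ≤ r * (1 - r))
    (p q : ℕ) :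
    (2 * r - 1) * (pathContinuant c (p + 1) * pathContinuant c (q + 1)) <
      pathContinuant c (p + q + 2) := by
  have hp := mul_lt_mul_of_pos_right (mul_pathContinuant_lt_succ hr0 hr1 hc (p + 1))
    (pathContinuant_succ_pos hr0 hr1 hc q)
  have hq := mul_lt_mul_of_pos_left (mul_pathContinuant_lt_succ hr0 hr1 hc (q + 1))
    (pathContinuant_succ_pos hr0 hr1 hc p)
  have hsplit : pathContinuant c (p + q + 2) =
      pathContinuant c (p + 2) * pathContinuant c (q + 1) +
        pathContinuant c (p + 1) * pathContinuant c (q + 2) -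
        pathContinuant c (p + 1) * pathContinuant c (q + 1) := by
    rw [show p + q + 2 = p + (q + 1) + 1 by ring, pathContinuant_add_add_one,
      pathContinuant_add_two c p]
    ring
  linarith

theorem pathContinuant_add_le_mul (hc0 : 0 ≤ c) (hr0 : 0 < r) (hr1 : r < 1)
    (hc : c ≤ r * (1 - r)) (p q : ℕ) :
    pathContinuant c (p + q + 1) ≤ pathContinuant c (p + 1) * pathContinuant c (q + 1) := by
  rw [pathContinuant_add_add_one]
  exact sub_le_self _ (mul_nonneg hc0 (mul_nonneg (pathContinuant_nonneg hr0 hr1 hc p)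
    (pathContinuant_nonneg hr0 hr1 hc q)))

end Order

end Continuant

section Green

/-- The Green function of `1 - αA` on the path with vertices `1, …, N - 1`, multiplied by the
determinant `pathContinuant (α ^ 2) N` so that it is polynomial in `α`. It vanishes at the two
virtual vertices `0` and `N`. -/
def pathGreen {R : Type*} [CommRing R] (α : R) (N k l : ℕ) : R :=
  α ^ (max k l - min k l) *
    (pathContinuant (α ^ 2) (min k l) * pathContinuant (α ^ 2) (N - max k l))

section CommRing

variable {R : Type*} [CommRing R] (α : R) {N k l d q : ℕ}

theorem pathGreen_comm (N k l : ℕ) : pathGreen α N k l = pathGreen α N l k := by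
  rw [pathGreen, pathGreen, max_comm, min_comm]

theorem pathGreen_eq (hl : k + d = l) (hN : l + q = N) :
    pathGreen α N k l = α ^ d * (pathContinuant (α ^ 2) k * pathContinuant (α ^ 2) q) := by
  subst hl hN
  simp [pathGreen]

theorem pathGreen_zero_left (N l : ℕ) : pathGreen α N 0 l = 0 := by
  simp [pathGreen]

theorem pathGreen_self_left (hl : l ≤ N) : pathGreen α N N l = 0 := by
  simp [pathGreen, hl]

theorem pathGreen_sub_mul_neighbors (hk : k + 1 < N) (hl : l < N) :
    pathGreen α N (k + 1) l - α * (pathGreen α N k l + pathGreen α N (k + 2) l) =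
      if k + 1 = l then pathContinuant (α ^ 2) N else 0 := by
  rcases lt_trichotomy (k + 1) l with hlt | rfl | hgt
  · obtain ⟨d, rfl⟩ := Nat.exists_eq_add_of_lt hlt
    obtain ⟨q, rfl⟩ := Nat.exists_eq_add_of_le hl.le
    rw [if_neg hlt.ne, pathGreen_eq α (d := d + 1) (by ring) rfl,
      pathGreen_eq α (d := d + 2) (by ring) rfl, pathGreen_eq α (d := d) (by ring) rfl,
      pathContinuant_add_two]
    ring
  · obtain ⟨q, rfl⟩ := Nat.exists_eq_add_of_lt hk
    rw [if_pos rfl, pathGreen_comm α _ (k + 2), pathGreen_eq α (d := 0) (q := q + 1) rfl (by rfl),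
      pathGreen_eq α (d := 1) (q := q + 1) rfl (by rfl),
      pathGreen_eq α (d := 1) (q := q) rfl (by ring),
      pathContinuant_add_add_one, pathContinuant_add_two]
    ring
  · obtain ⟨d, rfl⟩ := Nat.exists_eq_add_of_le (Nat.le_of_lt_succ hgt)
    obtain ⟨q, rfl⟩ := Nat.exists_eq_add_of_lt hk
    rw [if_neg hgt.ne', pathGreen_comm α _ (l + d + 1), pathGreen_comm α _ (l + d),
      pathGreen_comm α _ (l + d + 2), pathGreen_eq α (d := d + 1) (q := q + 1) (by rfl) (by rfl),
      pathGreen_eq α (d := d) (q := q + 2) rfl (by ring),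
      pathGreen_eq α (d := d + 2) (q := q) (by rfl) (by ring), pathContinuant_add_two _ q]
    ring

end CommRing

section Order

variable {R : Type*} [CommRing R] [LinearOrder R] [IsStrictOrderedRing R] {α r : R} {n k l d : ℕ}

theorem antitone_pow_mul_pathContinuant_sub (hα : 0 ≤ α) (hαr : α ≤ r) (hr0 : 0 < r) (hr1 : r < 1)
    (hc : α ^ 2 ≤ r * (1 - r)) (n : ℕ) :
    Antitone fun d => α ^ d * pathContinuant (α ^ 2) (n - d) := by
  refine antitone_nat_of_succ_le fun d => ?_
  have hnonneg := pathContinuant_nonneg hr0 hr1 hc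
  rcases le_or_gt n d with hnd | hdn
  · rw [Nat.sub_eq_zero_of_le (hnd.trans d.le_succ), pathContinuant_zero, mul_zero]
    exact mul_nonneg (pow_nonneg hα d) (hnonneg _)
  · obtain ⟨m, rfl⟩ := Nat.exists_eq_add_of_lt hdn
    rw [show d + m + 1 - (d + 1) = m by omega, show d + m + 1 - d = m + 1 by omega, pow_succ,
      mul_assoc]
    have hstep : α * pathContinuant (α ^ 2) m ≤ pathContinuant (α ^ 2) (m + 1) :=
      (mul_le_mul_of_nonneg_right hαr (hnonneg m)).trans
        (mul_pathContinuant_lt_succ hr0 hr1 hc m).le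
    exact mul_le_mul_of_nonneg_left hstep (pow_nonneg hα d)

theorem pow_mul_pathContinuant_le_pathGreen (hα : 0 ≤ α) (hr0 : 0 < r) (hr1 : r < 1)
    (hc : α ^ 2 ≤ r * (1 - r)) (hk : 0 < k) (hkl : k + d = l) (hl : l ≤ n) :
    α ^ d * pathContinuant (α ^ 2) (n - d) ≤ pathGreen α (n + 1) k l := by
  obtain ⟨p, rfl⟩ := Nat.exists_eq_add_one.2 hk
  obtain ⟨q, rfl⟩ := Nat.exists_eq_add_of_le hl
  rw [pathGreen_eq α (q := q + 1) hkl (by rfl), show l + q - d = p + q + 1 by omega]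
  exact mul_le_mul_of_nonneg_left (pathContinuant_add_le_mul (sq_nonneg α) hr0 hr1 hc p q)
    (pow_nonneg hα d)

theorem pathGreen_lt_pow_mul_pathContinuant (hα : 0 < α) (hαr : α ≤ 2 * r - 1) (hr1 : r < 1)
    (hc : α ^ 2 ≤ r * (1 - r)) (hk : 0 < k) (hkl : k + (d + 1) = l) (hl : l ≤ n) :
    pathGreen α (n + 1) k l < α ^ d * pathContinuant (α ^ 2) (n - d) := by
  obtain ⟨p, rfl⟩ := Nat.exists_eq_add_one.2 hk
  obtain ⟨q, rfl⟩ := Nat.exists_eq_add_of_le hl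
  have hr0 : 0 < r := by linarith
  have hpos := pathContinuant_succ_pos hr0 hr1 hc
  rw [pathGreen_eq α (q := q + 1) hkl (by rfl), show l + q - d = p + q + 2 by omega, pow_succ,
    mul_assoc]
  refine mul_lt_mul_of_pos_left ?_ (pow_pos hα d)
  exact (mul_le_mul_of_nonneg_right hαr (mul_pos (hpos p) (hpos q)).le).trans_lt
    (mul_pathContinuant_mul_lt_add hr0 hr1 hc p q)

theorem pathGreen_lt_pathGreen {k' l' : ℕ} (hα : 0 < α) (hαr : α ≤ 2 * r - 1) (hr1 : r < 1)
    (hc : α ^ 2 ≤ r * (1 - r)) (hk : 0 < k) (hl : l ≤ n) (hk' : 0 < k') (hkl' : k' ≤ l')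
    (hl' : l' ≤ n) (hlt : l' - k' < l - k) :
    pathGreen α (n + 1) k l < pathGreen α (n + 1) k' l' := by
  have hr0 : 0 < r := by linarith
  have hle : α ≤ r := by linarith
  calc pathGreen α (n + 1) k l
      < α ^ (l - k - 1) * pathContinuant (α ^ 2) (n - (l - k - 1)) :=
        pathGreen_lt_pow_mul_pathContinuant hα hαr hr1 hc hk (by omega) hl
    _ ≤ α ^ (l' - k') * pathContinuant (α ^ 2) (n - (l' - k')) :=
        antitone_pow_mul_pathContinuant_sub hα.le hle hr0 hr1 hc n (Nat.le_sub_one_of_lt hlt)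
    _ ≤ pathGreen α (n + 1) k' l' :=
        pow_mul_pathContinuant_le_pathGreen hα.le hr0 hr1 hc hk' (Nat.add_sub_of_le hkl') hl'

end Order

end Green

section PathAdj

variable {n : ℕ}

theorem sum_pathAdj_mul {g : ℕ → ℝ} (h0 : g 0 = 0) (hn : g (n + 1) = 0) (i : Fin n) :
    ∑ k, pathAdj n i k * g (k + 1) = g i + g (i + 2) := by
  have hsplit (k : Fin n) : pathAdj n i k * g (k + 1) =
      (if (k : ℕ) + 1 = i then g i else 0) + if (i : ℕ) + 1 = k then g (i + 2) else 0 := by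
    grind [pathAdj]
  have hleft : ∑ k : Fin n, (if (k : ℕ) + 1 = i then g i else 0) = g i := by
    obtain ⟨_ | m, hm⟩ := i
    · simp [h0]
    · simp [Fin.sum_univ_eq_sum_range (fun k => if k = m then g (m + 1) else 0),
        Nat.lt_of_succ_lt hm]
  have hright : ∑ k : Fin n, (if (i : ℕ) + 1 = k then g (i + 2) else 0) = g (i + 2) := by
    rw [Fin.sum_univ_eq_sum_range (fun k => if (i : ℕ) + 1 = k then g (i + 2) else 0),
      Finset.sum_ite_eq]
    split_ifs with hi
    · rfl
    · rw [show (i : ℕ) + 2 = n + 1 by grind, hn]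
  simp only [hsplit, Finset.sum_add_distrib, hleft, hright]

theorem one_sub_smul_pathAdj_mul_pathGreen (α : ℝ) (n : ℕ) :
    ((1 : Matrix (Fin n) (Fin n) ℝ) - α • pathAdj n) *
        Matrix.of (fun i j : Fin n => pathGreen α (n + 1) (i + 1) (j + 1)) =
      pathContinuant (α ^ 2) (n + 1) • (1 : Matrix (Fin n) (Fin n) ℝ) := by
  ext i j
  rw [sub_mul, one_mul, smul_mul_assoc, Matrix.sub_apply, Matrix.smul_apply,
    Matrix.mul_apply, Matrix.smul_apply]
  simp only [Matrix.of_apply, smul_eq_mul]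
  rw [sum_pathAdj_mul (g := fun k => pathGreen α (n + 1) k (j + 1)) (pathGreen_zero_left α _ _)
      (pathGreen_self_left α (by omega)),
    pathGreen_sub_mul_neighbors α (by omega) (by omega)]
  simp [Matrix.one_apply, Fin.ext_iff]

theorem inv_one_sub_smul_pathAdj_s16 {α : ℝ} (hE : pathContinuant (α ^ 2) (n + 1) ≠ 0) :
    ((1 : Matrix (Fin n) (Fin n) ℝ) - α • pathAdj n)⁻¹ =
      (pathContinuant (α ^ 2) (n + 1))⁻¹ •
        Matrix.of (fun i j : Fin n => pathGreen α (n + 1) (i + 1) (j + 1)) := by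
  refine Matrix.inv_eq_right_inv ?_
  rw [mul_smul_comm, one_sub_smul_pathAdj_mul_pathGreen, inv_smul_smul₀ hE]

theorem inv_one_sub_smul_pathAdj_sub_one_apply {α : ℝ}
    (hE : pathContinuant (α ^ 2) (n + 1) ≠ 0) {i j : Fin n} (hij : i ≠ j) :
    (((1 : Matrix (Fin n) (Fin n) ℝ) - α • pathAdj n)⁻¹ - 1) i j =
      (pathContinuant (α ^ 2) (n + 1))⁻¹ * pathGreen α (n + 1) (i + 1) (j + 1) := by
  rw [inv_one_sub_smul_pathAdj_s16 hE, Matrix.sub_apply, Matrix.one_apply_ne hij, sub_zero,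
    Matrix.smul_apply, Matrix.of_apply, smul_eq_mul]

end PathAdj

theorem stmt16_general {n : ℕ} {α : ℝ} (hα0 : 0 < α) (hα1 : α ≤ 1 / √5) {i j i' j' : Fin n}
    (hij : i < j) (hij' : i' < j') (hgt : (j' : ℕ) - i' < j - i) :
    (((1 : Matrix (Fin n) (Fin n) ℝ) - α • pathAdj n)⁻¹ - 1) i j <
      (((1 : Matrix (Fin n) (Fin n) ℝ) - α • pathAdj n)⁻¹ - 1) i' j' := by
  have hsq : 5 * α ^ 2 ≤ 1 := by
    have h := pow_le_pow_left₀ hα0.le hα1 2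
    rw [div_pow, Real.sq_sqrt (by norm_num)] at h
    linarith
  have hr1 : (1 + α) / 2 < 1 := by nlinarith
  have hc : α ^ 2 ≤ (1 + α) / 2 * (1 - (1 + α) / 2) := by linarith
  have hE := pathContinuant_succ_pos (by linarith) hr1 hc n
  rw [inv_one_sub_smul_pathAdj_sub_one_apply hE.ne' hij.ne,
    inv_one_sub_smul_pathAdj_sub_one_apply hE.ne' hij'.ne]
  refine mul_lt_mul_of_pos_left ?_ (inv_pos.2 hE)
  exact pathGreen_lt_pathGreen hα0 (by linarith) hr1 hc (by omega) (by omega) (by omega) (by omega)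
    (by omega) (by omega)

theorem stmt16 (n : ℕ) (hn : 2 ≤ n) (α : ℝ) (hα0 : 0 < α) (hα1 : α < 1 / Real.sqrt 5)
    (i j i' j' : ℕ)
    (hi : 1 ≤ i) (hij : i < j) (hjn : j ≤ n)
    (hi' : 1 ≤ i') (hij' : i' < j') (hjn' : j' ≤ n)
    (hgt : j - i > j' - i') :
    (((1 : Matrix (Fin n) (Fin n) ℝ) - α • pathAdj n)⁻¹ - 1)
        ⟨i - 1, by omega⟩ ⟨j - 1, by omega⟩
      < (((1 : Matrix (Fin n) (Fin n) ℝ) - α • pathAdj n)⁻¹ - 1)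
          ⟨i' - 1, by omega⟩ ⟨j' - 1, by omega⟩ :=
  stmt16_general hα0 hα1.le (Fin.mk_lt_mk.2 (by omega)) (Fin.mk_lt_mk.2 (by omega))
    (by dsimp only; omega)
end
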